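/- arXiv:2602.20797 — 2 statements merged into one kernel-verified Lean document; each statement's English description precedes it below -/
import Mathlib

section
/- Let δ₁,…,δ₅ be complex numbers with s₁ = δ₁+δ₂+δ₃+δ₄+δ₅ = 0. If the list (δ₁,…,δ₅) is realizable, then it is persymmetrically realizable, i.e., there exists a 5×5 entrywise nonnegative persymmetric real matrix whose characteristic polynomial over ℂ equals ∏ᵢ₌₁⁵(X−δᵢ). -/
open Matrix Polynomial

/-!
Expand the characteristic polynomial of a 5 × 5 matrix with zero diagonal over permutations and
write `e m` for the total weight of the permutations of cycle type `m`. The polynomial is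
`X⁵ - a X³ - b X² - c X - d` with `a = e {2}`, `b = e {3}`, `c = e {4} - e {2, 2}` and
`d = e {5} - e {2, 3}`. Let `t` be the largest total weight of the transpositions disjoint from a
given transposition. Three transpositions of five points are never pairwise disjoint, so Mantel's
argument gives `e {2, 2} ≤ t (a - t)`. A 3-cycle moves both points of some transposition, so
`e {2, 3} ≤ t b`. Hence `c + t (a - t) ≥ 0` and `d + t b ≥ 0` for some `0 ≤ t ≤ a`, and two
explicit families of persymmetric matrices realize all nonnegative `a`, `b` and real `c`, `d` of
this kind.
-/

namespace PersymmetricRealization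

open Equiv Finset

section CycleSums

variable {n R : Type*} [Fintype n] [DecidableEq n]

variable (n) in
/-- The permutations of `n` of cycle type `m`; as in Mathlib, `m` does not record fixed points. -/
def ofCycleType (m : Multiset ℕ) : Finset (Perm n) := {σ | σ.cycleType = m}

theorem mem_ofCycleType {m : Multiset ℕ} {σ : Perm n} :
    σ ∈ ofCycleType n m ↔ σ.cycleType = m := by
  rw [ofCycleType, mem_filter_univ]

theorem mem_ofCycleType_singleton {k : ℕ} {σ : Perm n} :
    σ ∈ ofCycleType n {k} ↔ σ.IsCycle ∧ #σ.support = k := by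
  rw [mem_ofCycleType]
  constructor
  · intro h
    exact ⟨Perm.card_cycleType_eq_one.1 (by rw [h, Multiset.card_singleton]),
      by rw [← Perm.sum_cycleType, h, Multiset.sum_singleton]⟩
  · rintro ⟨hσ, rfl⟩
    exact hσ.cycleType

theorem mul_mem_ofCycleType_cons {k : ℕ} {m : Multiset ℕ} {ρ τ : Perm n}
    (hρ : ρ ∈ ofCycleType n m) (hτ : τ ∈ ofCycleType n {k}) (h : ρ.Disjoint τ) :
    ρ * τ ∈ ofCycleType n (k ::ₘ m) := by
  rw [mem_ofCycleType] at *
  rw [h.cycleType_mul, hρ, hτ, add_comm, Multiset.singleton_add]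

theorem mul_inv_mem_ofCycleType {k : ℕ} {m : Multiset ℕ} {σ τ : Perm n}
    (hσ : σ ∈ ofCycleType n (k ::ₘ m)) (hτ : τ ∈ σ.cycleFactorsFinset)
    (hk : τ ∈ ofCycleType n {k}) : σ * τ⁻¹ ∈ ofCycleType n m := by
  rw [mem_ofCycleType] at *
  rw [Perm.cycleType_mul_inv_mem_cycleFactorsFinset_eq_sub hτ, hσ, hk, Multiset.sub_singleton,
    Multiset.erase_cons_head]

theorem exists_transposition_support_subset {ρ : Perm n} (hρ : ρ ≠ 1) :
    ∃ τ ∈ ofCycleType n {2}, τ.support ⊆ ρ.support := by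
  obtain ⟨i, hi⟩ := nonempty_iff_ne_empty.2 (Perm.support_eq_empty_iff.not.2 hρ)
  have hne : i ≠ ρ i := (Perm.mem_support.1 hi).symm
  refine ⟨swap i (ρ i), mem_ofCycleType_singleton.2
    ⟨Perm.isCycle_swap hne, Perm.card_support_swap hne⟩, ?_⟩
  rw [Perm.support_swap hne, insert_subset_iff, singleton_subset_iff]
  exact ⟨hi, Perm.apply_mem_support.2 hi⟩

theorem cycleType_mem_of_card_eq_five (hn : Fintype.card n = 5) (σ : Perm n) :
    σ.cycleType ∈ ({0, {2}, {3}, {4}, {5}, {2, 2}, {2, 3}} : Finset (Multiset ℕ)) := by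
  have htwo : ∀ k ∈ σ.cycleType, 2 ≤ k := fun _ => Perm.two_le_of_mem_cycleType
  have hsum : σ.cycleType.sum ≤ 5 := σ.sum_cycleType_le.trans_eq hn
  have hcard : σ.cycleType.card ≤ 2 := by
    have := Multiset.card_nsmul_le_sum htwo
    rw [smul_eq_mul] at this
    lia
  generalize σ.cycleType = m at *
  interval_cases h : m.card
  · rw [Multiset.card_eq_zero.1 h]
    decide
  · obtain ⟨i, rfl⟩ := Multiset.card_eq_one.1 h
    have hi := htwo i (by simp)
    rw [Multiset.sum_singleton] at hsum
    interval_cases i <;> decide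
  · obtain ⟨i, j, rfl⟩ := Multiset.card_eq_two.1 h
    have hi := htwo i (by simp)
    have hj := htwo j (by simp)
    rw [Multiset.insert_eq_cons, Multiset.sum_cons, Multiset.sum_singleton] at hsum
    have hi' : i ≤ 3 := by lia
    have hj' : j ≤ 3 := by lia
    interval_cases i <;> interval_cases j <;> first | decide | lia

section CommSemiring

variable [CommSemiring R]

/-- The weight of a permutation `σ` in the weighted digraph with adjacency matrix `A`: the product
of the weights of the arcs of its nontrivial cycles. -/
def permWeight (A : Matrix n n R) (σ : Perm n) : R := ∏ i ∈ σ.support, A (σ i) i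

/-- The total weight of the permutations of cycle type `m`. These sums are, up to sign, the parts
into which the coefficients of the characteristic polynomial split. -/
def cycleSum (A : Matrix n n R) (m : Multiset ℕ) : R := ∑ σ ∈ ofCycleType n m, permWeight A σ

/-- The total weight of the `k`-cycles disjoint from `ρ`. Disjointness is expressed through
supports because it is then decidable. -/
def disjointCycleSum (A : Matrix n n R) (k : ℕ) (ρ : Perm n) : R :=
  ∑ τ ∈ ofCycleType n {k} with Disjoint ρ.support τ.support, permWeight A τ

theorem permWeight_mul (A : Matrix n n R) {σ τ : Perm n} (h : σ.Disjoint τ) :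
    permWeight A (σ * τ) = permWeight A σ * permWeight A τ := by
  rw [permWeight, h.support_mul, prod_union h.disjoint_support]
  congr 1 <;> refine prod_congr rfl fun i hi => ?_
  · rw [Perm.mul_apply, (h i).resolve_left (Perm.mem_support.1 hi)]
  · rw [h.commute.eq, Perm.mul_apply, (h i).resolve_right (Perm.mem_support.1 hi)]

theorem cycleSum_zero (A : Matrix n n R) : cycleSum A 0 = 1 := by
  have : ofCycleType n 0 = {1} := by
    ext σ
    rw [mem_ofCycleType, Perm.cycleType_eq_zero, mem_singleton]
  rw [cycleSum, this, sum_singleton, permWeight, Perm.support_one, prod_empty]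

-- Both sides count the pairs of a permutation of cycle type `k ::ₘ m` and one of its `k`-cycles,
-- weighted by the permutation.
theorem sum_permWeight_mul_disjointCycleSum (A : Matrix n n R) (k : ℕ) (m : Multiset ℕ) :
    ∑ ρ ∈ ofCycleType n m, permWeight A ρ * disjointCycleSum A k ρ =
      (k ::ₘ m).count k * cycleSum A (k ::ₘ m) := by
  have hcount : ∀ σ ∈ ofCycleType n (k ::ₘ m),
      ∑ τ ∈ σ.cycleFactorsFinset with #τ.support = k, permWeight A σ =
        (k ::ₘ m).count k * permWeight A σ := fun σ hσ => by
    rw [sum_const, nsmul_eq_mul, ← mem_ofCycleType.1 hσ, Perm.cycleType_def, Multiset.count_map]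
    simp only [Function.comp_apply, eq_comm (a := k)]
    rfl
  simp only [disjointCycleSum, cycleSum, mul_sum, ← sum_congr rfl hcount]
  rw [sum_sigma', sum_sigma']
  refine sum_bij' (fun p _ => ⟨p.1 * p.2, p.2⟩) (fun p _ => ⟨p.1 * p.2⁻¹, p.2⟩)
    (fun ⟨ρ, τ⟩ h => ?_) (fun ⟨σ, τ⟩ h => ?_) (fun _ _ => by simp) (fun _ _ => by simp)
    (fun ⟨ρ, τ⟩ h => ?_)
  all_goals simp only [mem_sigma, mem_filter, ← Perm.disjoint_iff_disjoint_support] at h ⊢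
  · obtain ⟨hρ, hτ, hdisj⟩ := h
    have hcycle := mem_ofCycleType_singleton.1 hτ
    refine ⟨mul_mem_ofCycleType_cons hρ hτ hdisj, ?_, hcycle.2⟩
    rw [hdisj.cycleFactorsFinset_mul_eq_union, hcycle.1.cycleFactorsFinset_eq_singleton]
    exact mem_union_right _ (mem_singleton_self τ)
  · obtain ⟨hσ, hτ, hcard⟩ := h
    have hk : τ ∈ ofCycleType n {k} :=
      mem_ofCycleType_singleton.2 ⟨(Perm.mem_cycleFactorsFinset_iff.1 hτ).1, hcard⟩
    exact ⟨mul_inv_mem_ofCycleType hσ hτ hk, hk,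
      Perm.disjoint_mul_inv_of_mem_cycleFactorsFinset hτ⟩
  · exact (permWeight_mul A h.2.2).symm

end CommSemiring

section Charpoly

variable [CommRing R] {A : Matrix n n R}

theorem sign_smul_prod_charmatrix (hA : ∀ i, A i i = 0) (σ : Perm n) :
    Perm.sign σ • ∏ i, A.charmatrix (σ i) i =
      (-1) ^ σ.cycleType.card * C (permWeight A σ) *
        X ^ (Fintype.card n - σ.cycleType.sum) := by
  have hmoved : ∏ i ∈ σ.support, A.charmatrix (σ i) i =
      (-1) ^ σ.cycleType.sum * C (permWeight A σ) := by
    rw [prod_congr rfl fun i hi => A.charmatrix_apply_ne _ _ (Perm.mem_support.1 hi),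
      prod_neg, permWeight, map_prod, Perm.sum_cycleType]
  have hfixed : ∏ i ∈ σ.supportᶜ, A.charmatrix (σ i) i =
      X ^ (Fintype.card n - σ.cycleType.sum) := by
    rw [prod_congr rfl fun i hi => by
        rw [Perm.notMem_support.1 (mem_compl.1 hi), charmatrix_apply_eq, hA, map_zero, sub_zero],
      prod_const, card_compl, Perm.sum_cycleType]
  have hsq : ((-1) ^ σ.cycleType.sum * (-1) ^ σ.cycleType.sum : R[X]) = 1 := by
    rw [← mul_pow, neg_one_mul, neg_neg, one_pow]
  rw [← prod_mul_prod_compl σ.support, hmoved, hfixed, Perm.sign_of_cycleType, Units.smul_def,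
    zsmul_eq_mul, pow_add]
  push_cast
  linear_combination ((-1) ^ σ.cycleType.card * C (permWeight A σ) *
    X ^ (Fintype.card n - σ.cycleType.sum)) * hsq

theorem charpoly_eq_sum_cycleSum (hA : ∀ i, A i i = 0) {T : Finset (Multiset ℕ)}
    (hT : ∀ σ : Perm n, σ.cycleType ∈ T) :
    A.charpoly = ∑ m ∈ T, (-1) ^ m.card * C (cycleSum A m) * X ^ (Fintype.card n - m.sum) := by
  rw [charpoly, det_apply, ← sum_fiberwise_of_maps_to fun σ _ => hT σ]
  refine sum_congr rfl fun m _ => ?_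
  rw [cycleSum, map_sum, mul_sum, sum_mul]
  refine sum_congr rfl fun σ hσ => ?_
  rw [sign_smul_prod_charmatrix hA, mem_ofCycleType.1 hσ]

/-- A monic quintic without `X ^ 4` term, parametrized by the negatives of its other
coefficients. -/
noncomputable def depressedQuintic (a b c d : R) : R[X] :=
  X ^ 5 - C a * X ^ 3 - C b * X ^ 2 - C c * X - C d

theorem charpoly_eq_depressedQuintic (hn : Fintype.card n = 5) (hA : ∀ i, A i i = 0) :
    A.charpoly = depressedQuintic (cycleSum A {2}) (cycleSum A {3})
      (cycleSum A {4} - cycleSum A {2, 2}) (cycleSum A {5} - cycleSum A {2, 3}) := by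
  rw [charpoly_eq_sum_cycleSum hA (cycleType_mem_of_card_eq_five hn), hn, depressedQuintic]
  repeat rw [sum_insert (by decide)]
  rw [sum_singleton]
  simp only [Multiset.card_zero, pow_zero, cycleSum_zero, map_one, mul_one, Multiset.sum_zero,
    tsub_zero, one_mul, Multiset.card_singleton, pow_one, neg_mul, Multiset.sum_singleton,
    Nat.reduceSub, tsub_self, Multiset.insert_eq_cons, Multiset.card_cons, Nat.reduceAdd,
    even_two, Even.neg_pow, one_pow, Multiset.sum_cons, map_sub]
  ring

end Charpoly

section Nonneg

variable [CommSemiring R] [PartialOrder R] [IsOrderedRing R] {A : Matrix n n R}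

theorem permWeight_nonneg (hA : ∀ i j, 0 ≤ A i j) (σ : Perm n) : 0 ≤ permWeight A σ :=
  prod_nonneg fun _ _ => hA _ _

theorem cycleSum_nonneg (hA : ∀ i j, 0 ≤ A i j) (m : Multiset ℕ) : 0 ≤ cycleSum A m :=
  sum_nonneg fun _ _ => permWeight_nonneg hA _

theorem disjointCycleSum_nonneg (hA : ∀ i j, 0 ≤ A i j) (k : ℕ) (ρ : Perm n) :
    0 ≤ disjointCycleSum A k ρ :=
  sum_nonneg fun _ _ => permWeight_nonneg hA _

theorem disjointCycleSum_le_cycleSum (hA : ∀ i j, 0 ≤ A i j) (k : ℕ) (ρ : Perm n) :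
    disjointCycleSum A k ρ ≤ cycleSum A {k} :=
  sum_le_sum_of_subset_of_nonneg (filter_subset _ _) fun _ _ _ => permWeight_nonneg hA _

theorem disjointCycleSum_anti (hA : ∀ i j, 0 ≤ A i j) (k : ℕ) {ρ τ : Perm n}
    (h : τ.support ⊆ ρ.support) : disjointCycleSum A k ρ ≤ disjointCycleSum A k τ :=
  sum_le_sum_of_subset_of_nonneg
    (monotone_filter_right _ fun _ _ => Disjoint.mono_left h)
    fun _ _ _ => permWeight_nonneg hA _

theorem count_mul_cycleSum_two_cons_le (hA : ∀ i j, 0 ≤ A i j) {t : R}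
    (ht : ∀ τ ∈ ofCycleType n {2}, disjointCycleSum A 2 τ ≤ t) {m : Multiset ℕ} (hm : m ≠ 0) :
    (2 ::ₘ m).count 2 * cycleSum A (2 ::ₘ m) ≤ t * cycleSum A m := by
  rw [← sum_permWeight_mul_disjointCycleSum, mul_comm t, cycleSum, sum_mul]
  refine sum_le_sum fun ρ hρ => mul_le_mul_of_nonneg_left ?_ (permWeight_nonneg hA ρ)
  have hne : ρ ≠ 1 := by
    rwa [← Perm.cycleType_eq_zero.ne, mem_ofCycleType.1 hρ]
  obtain ⟨τ, hτ, hsub⟩ := exists_transposition_support_subset hne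
  exact (disjointCycleSum_anti hA 2 hsub).trans (ht τ hτ)

end Nonneg

end CycleSums

section Mantel

variable {V R : Type*} [CommRing R] [LinearOrder R] [IsStrictOrderedRing R]
  {s : Finset V} {r : V → V → Prop} [DecidableRel r] [Std.Symm r] {x : V → R} {v : V}

-- The neighbourhood of `v` is independent, so every related pair has a member outside it.
theorem sum_mul_sum_filter_le_of_indep (hx : ∀ u ∈ s, 0 ≤ x u)
    (hindep : ∀ u ∈ s, ∀ w ∈ s, r v u → r v w → ¬ r u w) :
    ∑ u ∈ s with r v u, x u * ∑ w ∈ s with r u w, x w ≤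
      ∑ u ∈ s with ¬ r v u, x u * ∑ w ∈ s with r u w, x w := by
  simp only [mul_sum]
  calc ∑ u ∈ s with r v u, ∑ w ∈ s with r u w, x u * x w
    _ = ∑ u ∈ s with r v u, ∑ w ∈ s with ¬ r v w, if r u w then x u * x w else 0 := by
      refine sum_congr rfl fun u hu => ?_
      rw [mem_filter] at hu
      rw [sum_filter, sum_filter]
      refine sum_congr rfl fun w hw => ?_
      by_cases hvw : r v w <;> simp [hvw, hindep u hu.1 w hw hu.2]
    _ = ∑ w ∈ s with ¬ r v w, ∑ u ∈ s with r v u, if r w u then x w * x u else 0 := by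
      rw [sum_comm]
      simp only [comm_of r, mul_comm]
    _ ≤ ∑ w ∈ s with ¬ r v w, ∑ u ∈ s with r w u, x w * x u := by
      refine sum_le_sum fun w hw => ?_
      rw [sum_filter (r w)]
      refine sum_le_sum_of_subset_of_nonneg (filter_subset _ _) fun u hu _ => ?_
      exact ite_nonneg (mul_nonneg (hx w (mem_filter.1 hw).1) (hx u hu)) le_rfl

/-- A weighted form of Mantel's theorem. -/
theorem sum_mul_sum_filter_le_of_max (hx : ∀ u ∈ s, 0 ≤ x u)
    (hindep : ∀ u ∈ s, ∀ w ∈ s, r v u → r v w → ¬ r u w)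
    (hmax : ∀ u ∈ s, ∑ w ∈ s with r u w, x w ≤ ∑ w ∈ s with r v w, x w) :
    ∑ u ∈ s, x u * ∑ w ∈ s with r u w, x w ≤
      2 * ((∑ w ∈ s with r v w, x w) * (∑ u ∈ s, x u - ∑ w ∈ s with r v w, x w)) := by
  set N : V → R := fun u => ∑ w ∈ s with r u w, x w
  have hinside : ∑ u ∈ s with r v u, x u * N u ≤ ∑ u ∈ s with ¬ r v u, x u * N u :=
    sum_mul_sum_filter_le_of_indep hx hindep
  have houtside : ∑ u ∈ s with ¬ r v u, x u * N u ≤ N v * (∑ u ∈ s, x u - N v) := by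
    rw [← sum_filter_add_sum_filter_not s (r v) x, add_sub_cancel_left, mul_sum]
    refine sum_le_sum fun u hu => ?_
    have hus := (mem_filter.1 hu).1
    rw [mul_comm]
    exact mul_le_mul_of_nonneg_right (hmax u hus) (hx u hus)
  linarith [sum_filter_add_sum_filter_not s (r v) fun u => x u * N u]

end Mantel

section CycleSumBounds

variable {n R : Type*} [Fintype n] [DecidableEq n]
  [CommRing R] [LinearOrder R] [IsStrictOrderedRing R] {A : Matrix n n R}

theorem cycleSum_two_two_le (hn : Fintype.card n < 6) (hA : ∀ i j, 0 ≤ A i j) {σ : Perm n}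
    (hσ : σ ∈ ofCycleType n {2})
    (hmax : ∀ τ ∈ ofCycleType n {2}, disjointCycleSum A 2 τ ≤ disjointCycleSum A 2 σ) :
    cycleSum A {2, 2} ≤ disjointCycleSum A 2 σ * (cycleSum A {2} - disjointCycleSum A 2 σ) := by
  let r : Perm n → Perm n → Prop := fun τ ρ => Disjoint τ.support ρ.support
  have : Std.Symm r := ⟨fun _ _ h => Disjoint.symm h⟩
  have hindep : ∀ τ ∈ ofCycleType n {2}, ∀ ρ ∈ ofCycleType n {2}, r σ τ → r σ ρ → ¬ r τ ρ := by
    intro τ hτ ρ hρ hστ hσρ hτρ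
    have hcard := card_le_univ (σ.support ∪ τ.support ∪ ρ.support)
    rw [card_union_of_disjoint (disjoint_union_left.2 ⟨hσρ, hτρ⟩), card_union_of_disjoint hστ,
      (mem_ofCycleType_singleton.1 hσ).2, (mem_ofCycleType_singleton.1 hτ).2,
      (mem_ofCycleType_singleton.1 hρ).2] at hcard
    lia
  have hpairs := sum_permWeight_mul_disjointCycleSum A 2 {2}
  have hmantel := sum_mul_sum_filter_le_of_max (r := r) (fun τ _ => permWeight_nonneg hA τ)
    hindep hmax
  exact le_of_mul_le_mul_left (hpairs.symm.trans_le hmantel) two_pos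

theorem exists_cycleSum_bounds (hn : Fintype.card n = 5) (hA : ∀ i j, 0 ≤ A i j) :
    ∃ t, 0 ≤ t ∧ t ≤ cycleSum A {2} ∧ cycleSum A {2, 2} ≤ t * (cycleSum A {2} - t) ∧
      cycleSum A {2, 3} ≤ t * cycleSum A {3} := by
  have : Nontrivial n := Fintype.one_lt_card_iff_nontrivial.1 (by lia)
  obtain ⟨ρ, hρ⟩ := exists_ne (1 : Perm n)
  obtain ⟨τ, hτ, -⟩ := exists_transposition_support_subset hρ
  obtain ⟨σ, hσ, hmax⟩ := exists_max_image (ofCycleType n {2}) (disjointCycleSum A 2) ⟨τ, hτ⟩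
  refine ⟨disjointCycleSum A 2 σ, disjointCycleSum_nonneg hA 2 σ,
    disjointCycleSum_le_cycleSum hA 2 σ, cycleSum_two_two_le (by lia) hA hσ hmax, ?_⟩
  simpa using count_mul_cycleSum_two_cons_le hA hmax (Multiset.singleton_ne_zero 3)

end CycleSumBounds

section Families

section CommRing

variable {R : Type*} [CommRing R]

/-- A family of persymmetric matrices. In the associated digraph, the 2-cycles other than the one
through `0` and `4` pass through the fixed point `2` of `Fin.rev`. -/
def centralFamily (b p q r s u : R) : Matrix (Fin 5) (Fin 5) R :=
  !![0, p, 0, 0, q;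
     0, 0, 1, 0, 0;
     0, s, 0, 1, 0;
     u, b, s, 0, p;
     r, u, 0, 0, 0]

/-- A family of persymmetric matrices. In the associated digraph, the 2-cycle other than the one
through `0` and `4` avoids the fixed point `2` of `Fin.rev`. -/
def outerFamily (b r u v : R) : Matrix (Fin 5) (Fin 5) R :=
  !![0, 0, 0, 0, 1;
     u, 0, 1, v, 0;
     0, 0, 0, 1, 0;
     0, b, 0, 0, 0;
     r, 0, 0, u, 0]

theorem charpoly_centralFamily (b p q r s u : R) :
    (centralFamily b p q r s u).charpoly =
      depressedQuintic (q * r + 2 * s) b (2 * (p * u - q * r * s))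
        (p ^ 2 * r + q * u ^ 2 - q * r * b) := by
  simp [centralFamily, depressedQuintic, charpoly, charmatrix, det_succ_row_zero,
    Fin.sum_univ_succ, Fin.succAbove, map_ofNat C]
  ring

theorem charpoly_outerFamily (b r u v : R) :
    (outerFamily b r u v).charpoly =
      depressedQuintic (r + v * b) b (b * u ^ 2 - r * (v * b)) (-(r * b)) := by
  simp [outerFamily, depressedQuintic, charpoly, charmatrix, det_succ_row_zero,
    Fin.sum_univ_succ, Fin.succAbove]
  ring

end CommRing

/-- `f` is the characteristic polynomial of a nonnegative persymmetric `5 × 5` matrix. -/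
def IsPersymmetricCharpoly (f : ℝ[X]) : Prop :=
  ∃ A : Matrix (Fin 5) (Fin 5) ℝ,
    (∀ i j, 0 ≤ A i j) ∧ (∀ i j, A i j = A j.rev i.rev) ∧ A.charpoly = f

variable {a b c d p q r s t u v : ℝ}

theorem isPersymmetricCharpoly_centralFamily (hb : 0 ≤ b) (hp : 0 ≤ p) (hq : 0 ≤ q)
    (hr : 0 ≤ r) (hs : 0 ≤ s) (hu : 0 ≤ u) :
    IsPersymmetricCharpoly (centralFamily b p q r s u).charpoly := by
  refine ⟨centralFamily b p q r s u, ?_, ?_, rfl⟩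
  · simp [centralFamily, Fin.forall_fin_succ, *]
  · simp [centralFamily, Fin.forall_fin_succ]

theorem isPersymmetricCharpoly_outerFamily (hb : 0 ≤ b) (hr : 0 ≤ r) (hu : 0 ≤ u)
    (hv : 0 ≤ v) : IsPersymmetricCharpoly (outerFamily b r u v).charpoly := by
  refine ⟨outerFamily b r u v, ?_, ?_, rfl⟩
  · simp [outerFamily, Fin.forall_fin_succ, *]
  · simp [outerFamily, Fin.forall_fin_succ]

theorem isPersymmetricCharpoly_of_nonneg (ha : 0 ≤ a) (hb : 0 ≤ b) (hc : 0 ≤ c) (hd : 0 ≤ d) :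
    IsPersymmetricCharpoly (depressedQuintic a b c d) := by
  convert isPersymmetricCharpoly_centralFamily (p := 1) (q := 0) (s := a / 2) (u := c / 2)
    hb zero_le_one le_rfl hd (by positivity) (by positivity) using 1
  rw [charpoly_centralFamily]
  congr 1 <;> ring

-- `r` is the root of `r (a - r) = -c` in `[t, a]`; increasing `t` to `r` preserves `0 ≤ d + t b`.
theorem isPersymmetricCharpoly_of_nonpos (ht : 0 ≤ t) (hta : t ≤ a) (hb : 0 ≤ b) (hc : c ≤ 0)
    (hct : 0 ≤ c + t * (a - t)) (hdt : 0 ≤ d + t * b) :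
    IsPersymmetricCharpoly (depressedQuintic a b c d) := by
  obtain ⟨r, ⟨htr, hra⟩, hr : r * (a - r) = -c⟩ :
      -c ∈ (fun r => r * (a - r)) '' Set.Icc t a :=
    intermediate_value_Icc' hta (by fun_prop) ⟨by simpa using hc, by linarith⟩
  have hdr : 0 ≤ d + r * b := hdt.trans (by gcongr)
  convert isPersymmetricCharpoly_centralFamily (p := 0) (q := 1) (s := (a - r) / 2)
    (u := √(d + r * b)) hb le_rfl zero_le_one (ht.trans htr) (by linarith) (Real.sqrt_nonneg _)
    using 1
  rw [charpoly_centralFamily, Real.sq_sqrt hdr]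
  congr 1
  · ring
  · linarith
  · ring

theorem isPersymmetricCharpoly_of_nonneg_of_neg (hta : t ≤ a) (hb : 0 ≤ b) (hc : 0 ≤ c)
    (hd : d < 0) (hdt : 0 ≤ d + t * b) :
    IsPersymmetricCharpoly (depressedQuintic a b c d) := by
  have hb' : 0 < b := hb.lt_of_ne (by rintro rfl; linarith)
  obtain ⟨r, hr⟩ : ∃ r, r * b = -d := ⟨-d / b, div_mul_cancel₀ _ hb'.ne'⟩
  have hr0 : 0 ≤ r := nonneg_of_mul_nonneg_left (by linarith) hb'
  have har : 0 ≤ a - r :=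
    sub_nonneg.2 ((le_of_mul_le_mul_right (by linarith) hb').trans hta)
  have hu : 0 ≤ (c + r * (a - r)) / b := div_nonneg (add_nonneg hc (mul_nonneg hr0 har)) hb
  convert isPersymmetricCharpoly_outerFamily (u := √((c + r * (a - r)) / b))
    (v := (a - r) / b) hb hr0 (Real.sqrt_nonneg _) (div_nonneg har hb) using 1
  rw [charpoly_outerFamily, Real.sq_sqrt hu, div_mul_cancel₀ _ hb'.ne',
    mul_div_cancel₀ _ hb'.ne', hr]
  congr 1 <;> ring

theorem isPersymmetricCharpoly_depressedQuintic (ht : 0 ≤ t) (hta : t ≤ a) (hb : 0 ≤ b)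
    (hct : 0 ≤ c + t * (a - t)) (hdt : 0 ≤ d + t * b) :
    IsPersymmetricCharpoly (depressedQuintic a b c d) := by
  rcases le_total c 0 with hc | hc
  · exact isPersymmetricCharpoly_of_nonpos ht hta hb hc hct hdt
  rcases lt_or_ge d 0 with hd | hd
  · exact isPersymmetricCharpoly_of_nonneg_of_neg hta hb hc hd hdt
  · exact isPersymmetricCharpoly_of_nonneg (ht.trans hta) hb hc hd

theorem isPersymmetricCharpoly_of_trace_eq_zero {n : Type*} [Fintype n] [DecidableEq n]
    (hn : Fintype.card n = 5) {A : Matrix n n ℝ} (hA : ∀ i j, 0 ≤ A i j) (htr : A.trace = 0) :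
    IsPersymmetricCharpoly A.charpoly := by
  have hdiag : ∀ i, A i i = 0 := fun i =>
    (sum_eq_zero_iff_of_nonneg fun i _ => hA i i).1 htr i (mem_univ i)
  obtain ⟨t, ht, hta, hct, hdt⟩ := exists_cycleSum_bounds hn hA
  rw [charpoly_eq_depressedQuintic hn hdiag]
  exact isPersymmetricCharpoly_depressedQuintic ht hta (cycleSum_nonneg hA _)
    (by linarith [cycleSum_nonneg hA {4}]) (by linarith [cycleSum_nonneg hA {5}])

end Families

theorem trace_eq_zero_of_charpoly_map_eq {K L : Type*} [CommRing K] [CommRing L]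
    {n ι : Type*} [Fintype n] [DecidableEq n] [Fintype ι] {f : K →+* L}
    (hf : Function.Injective f) {A : Matrix n n K} {δ : ι → L}
    (hδ : ∑ i, δ i = 0) (h : A.charpoly.map f = ∏ i, (X - C (δ i))) : A.trace = 0 := by
  have hcoeff := congrArg nextCoeff h
  rw [nextCoeff_map hf, prod_X_sub_C_nextCoeff, hδ, neg_zero, map_eq_zero_iff f hf] at hcoeff
  rw [trace_eq_neg_charpoly_nextCoeff, hcoeff, neg_zero]

end PersymmetricRealization

/-- A realizable list of five complex numbers with zero sum is
persymmetrically realizable. -/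
theorem stmt_0 (δ : Fin 5 → ℂ) (hs1 : ∑ i, δ i = 0)
    (hreal : ∃ A : Matrix (Fin 5) (Fin 5) ℝ, (∀ i j, 0 ≤ A i j) ∧
      (Matrix.charpoly A).map (algebraMap ℝ ℂ) = ∏ i, (X - C (δ i))) :
    ∃ A : Matrix (Fin 5) (Fin 5) ℝ, (∀ i j, 0 ≤ A i j) ∧
      (∀ i j, A i j = A j.rev i.rev) ∧
      (Matrix.charpoly A).map (algebraMap ℝ ℂ) = ∏ i, (X - C (δ i)) := by
  obtain ⟨A, hA, hchar⟩ := hreal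
  have htr : A.trace = 0 := PersymmetricRealization.trace_eq_zero_of_charpoly_map_eq
    (algebraMap ℝ ℂ).injective hs1 hchar
  obtain ⟨B, hB, hpersymm, hBA⟩ :=
    PersymmetricRealization.isPersymmetricCharpoly_of_trace_eq_zero (Fintype.card_fin 5) hA htr
  exact ⟨B, hB, hpersymm, by rw [hBA, hchar]⟩
end

section
/- Let n ≥ 2, let δ be a positive real number, and let δ₂,…,δₙ be complex numbers, each with real part ≤ 0, such that the list (δ₂,…,δₙ) is closed under complex conjugation. Write sₖ for the k-th power sum of the n numbers δ,δ₂,…,δₙ. If s₁ ≥ 0 and s₂ − s₁² ≥ 0, then the list (δ,δ₂,…,δₙ) is persymmetrically realizable: there exists an n×n entrywise nonnegative persymmetric real matrix whose characteristic polynomial over ℂ equals (X−δ)∏ᵢ₌₂ⁿ(X−δᵢ). -/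
open Matrix Polynomial
open scoped ComplexOrder

/-!
Write the product of the factors `X - δᵢ` as a real polynomial `q`. It is a product of factors
`X + b` and `X² + a X + b` with nonnegative coefficients, and multiplication by such a factor
preserves nonnegativity of the `1 × 1` and `2 × 2` minors of the Hurwitz matrix. These minors make a
bound `qₖ ≤ δ qₖ₊₁` propagate from `k` to `k - 2`, so every nonleading coefficient of `(X - δ) q` is
nonpositive as soon as the first two are; by Newton's identities those are `-s₁` and
`(s₁² - s₂) / 2`.

A monic polynomial `X² p - 2 a X - b` with `a, b ≥ 0` is then realized by bordering a persymmetric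
realization `A` of `p`. The induction carries along a polynomial row vector `u` with `u₀ = 1` and
`u (X - A) = (0, …, 0, p)`, which certifies the characteristic polynomial: multiplying by the
adjugate of `X - A` shows that `p` divides it, and both are monic of the same degree.
-/

section Hurwitz

/-- Nonnegativity of all `1 × 1` and `2 × 2` minors of the infinite Hurwitz matrix
`(f (2 * j - i))`, where `f` vanishes at negative indices. The columns `j ≤ j'` and the rows
`i' ≤ i` give `l = 2 * j - i`, `x = 2 * j' - i`, `y = 2 * j - i'`, `h = 2 * j' - i'`, so the parity
condition says that `x - l` is twice a difference of column indices. Applied to the coefficients of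
a polynomial with roots of nonpositive real part, it stands in for total nonnegativity of that
matrix, and it bounds ratios of consecutive coefficients. -/
structure HurwitzMinorsNonneg {R : Type*} [Semiring R] [PartialOrder R] (f : ℕ → R) : Prop where
  nonneg (k : ℕ) : 0 ≤ f k
  mul_le_mul {l x y h : ℕ} (hx : l ≤ x) (hy : l ≤ y) (hsum : l + h = x + y)
    (hparity : l % 2 = x % 2) : f l * f h ≤ f x * f y

namespace HurwitzMinorsNonneg

section CommSemiring

variable {R : Type*} [CommSemiring R] [PartialOrder R] [IsOrderedRing R]

theorem coeff_one : HurwitzMinorsNonneg (1 : R[X]).coeff where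
  nonneg k := by
    rw [Polynomial.coeff_one]
    split_ifs <;> simp
  mul_le_mul {l x y h} _ _ _ _ := by
    simp only [Polynomial.coeff_one]
    split_ifs <;> first | omega | simp

theorem coeff_X_mul {q : R[X]} (hq : HurwitzMinorsNonneg q.coeff) :
    HurwitzMinorsNonneg (X * q).coeff := by
  have nonneg (k : ℕ) : 0 ≤ (X * q).coeff k := by
    cases k with
    | zero => rw [coeff_X_mul_zero]
    | succ k => exact (hq.nonneg k).trans_eq (Polynomial.coeff_X_mul q k).symm
  refine ⟨nonneg, fun {l x y h} hx hy hsum hparity => ?_⟩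
  rcases l with - | l
  · rw [coeff_X_mul_zero, zero_mul]
    exact mul_nonneg (nonneg x) (nonneg y)
  · obtain ⟨x, rfl⟩ := Nat.exists_eq_add_one.mpr (Nat.zero_lt_of_lt hx)
    obtain ⟨y, rfl⟩ := Nat.exists_eq_add_one.mpr (Nat.zero_lt_of_lt hy)
    obtain ⟨h, rfl⟩ := Nat.exists_eq_add_one.mpr (show 0 < h by omega)
    simp only [Polynomial.coeff_X_mul]
    exact hq.mul_le_mul (by omega) (by omega) (by omega) (by omega)

theorem linearCombination_shift {f : ℕ → R} (hf : HurwitzMinorsNonneg f) {e a b : R}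
    (he : 0 ≤ e) (ha : 0 ≤ a) (hb : 0 ≤ b) :
    HurwitzMinorsNonneg fun k => e * f k + a * f (k + 1) + b * f (k + 2) where
  nonneg k := by
    have := hf.nonneg k
    have := hf.nonneg (k + 1)
    have := hf.nonneg (k + 2)
    positivity
  mul_le_mul {l x y h} hx hy hsum hparity := by
    rcases hx.eq_or_lt with rfl | hx
    · obtain rfl : h = y := by omega
      rfl
    rcases hy.eq_or_lt with rfl | hy
    · obtain rfl : h = x := by omega
      exact (mul_comm _ _).le
    have minor {i j k m : ℕ} (hj : i ≤ j := by omega) (hk : i ≤ k := by omega)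
        (hsum : i + m = j + k := by omega) (hparity : i % 2 = j % 2 := by omega) :
        f i * f m ≤ f j * f k := hf.mul_le_mul hj hk hsum hparity
    calc
      _ = e * e * (f l * f h) + a * a * (f (l + 1) * f (h + 1)) +
            b * b * (f (l + 2) * f (h + 2)) +
            e * a * (f l * f (h + 1) + f (l + 1) * f h) +
            a * b * (f (l + 1) * f (h + 2) + f (l + 2) * f (h + 1)) +
            e * b * (f l * f (h + 2) + f (l + 2) * f h) := by ring
      _ ≤ e * e * (f x * f y) + a * a * (f (x + 1) * f (y + 1)) +
            b * b * (f (x + 2) * f (y + 2)) +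
            e * a * (f x * f (y + 1) + f (x + 1) * f y) +
            a * b * (f (x + 1) * f (y + 2) + f (x + 2) * f (y + 1)) +
            e * b * (f (x + 2) * f y + f x * f (y + 2)) := by
        gcongr ?_ * ?_ + ?_ * ?_ + ?_ * ?_ + ?_ * (?_ + ?_) + ?_ * (?_ + ?_) + ?_ * (?_ + ?_) <;>
          exact minor
      _ = _ := by ring

theorem coeff_quadratic_mul {q : R[X]} (hq : HurwitzMinorsNonneg q.coeff) {e a b : R}
    (he : 0 ≤ e) (ha : 0 ≤ a) (hb : 0 ≤ b) :
    HurwitzMinorsNonneg ((C e * X ^ 2 + C a * X + C b) * q).coeff := by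
  convert hq.coeff_X_mul.coeff_X_mul.linearCombination_shift he ha hb using 2 with k
  simp only [add_mul, mul_assoc, pow_two, coeff_add, coeff_C_mul, Polynomial.coeff_X_mul]

end CommSemiring

theorem le_mul_succ_of_top {R : Type*} [CommRing R] [LinearOrder R] [IsStrictOrderedRing R]
    {f : ℕ → R} (hf : HurwitzMinorsNonneg f) {N : ℕ} (hN : 0 < f N) {δ : R} (hδ : 0 ≤ δ)
    (htop : ∀ k < N, N ≤ k + 2 → f k ≤ δ * f (k + 1)) {k : ℕ} (hk : k < N) :
    f k ≤ δ * f (k + 1) := by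
  induction hd : N - k using Nat.strong_induction_on generalizing k with
  | _ d ih =>
    rcases le_or_gt N (k + 2) with hkN | hkN
    · exact htop k hk hkN
    have hshift : f (k + 2) ≤ δ * f (k + 3) := ih (N - (k + 2)) (by omega) hkN rfl
    rcases (hf.nonneg (k + 3)).eq_or_lt with hzero | hpos
    · have hzero' : f (k + 2) = 0 := by
        rw [← hzero, mul_zero] at hshift
        exact hshift.antisymm (hf.nonneg _)
      have hminor : f k * f N ≤ f (k + 2) * f (N - 2) :=
        hf.mul_le_mul (by omega) (by omega) (by omega) (by omega)
      rw [hzero', zero_mul] at hminor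
      exact (nonpos_of_mul_nonpos_left hminor hN).trans (mul_nonneg hδ (hf.nonneg _))
    · refine le_of_mul_le_mul_right ?_ hpos
      calc
        f k * f (k + 3) ≤ f (k + 2) * f (k + 1) :=
          hf.mul_le_mul (by omega) (by omega) (by omega) (by omega)
        _ ≤ δ * f (k + 3) * f (k + 1) := mul_le_mul_of_nonneg_right hshift (hf.nonneg _)
        _ = δ * f (k + 1) * f (k + 3) := by ring

theorem coeff_X_sub_C_mul_nonpos {R : Type*} [CommRing R] [LinearOrder R] [IsStrictOrderedRing R]
    {q : R[X]} (hq : HurwitzMinorsNonneg q.coeff) (hmonic : q.Monic) {δ : R} (hδ : 0 ≤ δ)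
    (hpred : ((X - C δ) * q).coeff q.natDegree ≤ 0)
    (hpred' : ((X - C δ) * q).coeff (q.natDegree - 1) ≤ 0) {k : ℕ} (hk : k ≤ q.natDegree) :
    ((X - C δ) * q).coeff k ≤ 0 := by
  have hcoeff (j : ℕ) : ((X - C δ) * q).coeff (j + 1) = q.coeff j - δ * q.coeff (j + 1) := by
    rw [sub_mul, coeff_sub, Polynomial.coeff_X_mul, coeff_C_mul]
  cases k with
  | zero => simpa [mul_coeff_zero] using mul_nonneg hδ (hq.nonneg 0)
  | succ k =>
    rw [hcoeff, sub_nonpos]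
    refine hq.le_mul_succ_of_top (hmonic.coeff_natDegree ▸ one_pos) hδ (fun j hj hNj => ?_) hk
    rw [← sub_nonpos, ← hcoeff]
    obtain h | h : j + 1 = q.natDegree ∨ j + 1 = q.natDegree - 1 := by omega
    · exact h ▸ hpred
    · exact h ▸ hpred'

end HurwitzMinorsNonneg

end Hurwitz

section Conj

theorem induction_of_map_eq_self {α : Type*} {σ : α → α} (hσ : σ.Involutive)
    {motive : Multiset α → Prop} (zero : motive 0)
    (cons : ∀ a s, σ a = a → motive s → motive (a ::ₘ s))
    (cons_cons : ∀ a s, motive s → motive (a ::ₘ σ a ::ₘ s))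
    {s : Multiset α} (hs : s.map σ = s) : motive s := by
  induction s using Multiset.strongInductionOn with
  | _ s ih =>
    rcases s.empty_or_exists_mem with rfl | ⟨a, ha⟩
    · exact zero
    obtain ⟨t, rfl⟩ := Multiset.exists_cons_of_mem ha
    by_cases hfix : σ a = a
    · rw [Multiset.map_cons, hfix, Multiset.cons_inj_right] at hs
      exact cons a t hfix (ih t (Multiset.lt_cons_self t a) hs)
    · have hmem : σ a ∈ a ::ₘ t := hs ▸ Multiset.mem_map_of_mem σ ha
      obtain ⟨u, rfl⟩ := Multiset.exists_cons_of_mem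
        ((Multiset.mem_cons.mp hmem).resolve_left hfix)
      rw [Multiset.map_cons, Multiset.map_cons, hσ a, Multiset.cons_swap,
        Multiset.cons_inj_right, Multiset.cons_inj_right] at hs
      exact cons_cons a u (ih u ((Multiset.lt_cons_self u _).trans (Multiset.lt_cons_self _ a)) hs)

theorem map_quadratic_eq_X_sub_C_mul_X_sub_C_conj (z : ℂ) :
    (C 1 * X ^ 2 + C (-(2 * z.re)) * X + C (Complex.normSq z) : ℝ[X]).map (algebraMap ℝ ℂ) =
      (X - C z) * (X - C (starRingEnd ℂ z)) := by
  have htrace : C ((2 * z.re : ℝ) : ℂ) = C z + C (starRingEnd ℂ z) := by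
    rw [← C_add, Complex.add_conj]
  have hnorm : C (Complex.normSq z : ℂ) = C z * C (starRingEnd ℂ z) := by
    rw [← C_mul, Complex.mul_conj]
  rw [C_neg, C_1, Polynomial.map_add, Polynomial.map_add, Polynomial.map_mul, Polynomial.map_mul,
    Polynomial.map_neg, Polynomial.map_pow, Polynomial.map_one, map_X, map_C, map_C,
    Complex.coe_algebraMap, htrace, hnorm]
  ring

theorem exists_hurwitzMinorsNonneg_map_eq_prod {s : Multiset ℂ} (hre : ∀ z ∈ s, z.re ≤ 0)
    (hconj : s.map (starRingEnd ℂ) = s) :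
    ∃ q : ℝ[X], HurwitzMinorsNonneg q.coeff ∧
      q.map (algebraMap ℝ ℂ) = (s.map fun z => X - C z).prod := by
  revert hre
  refine induction_of_map_eq_self (motive := fun s => (∀ z ∈ s, z.re ≤ 0) →
    ∃ q : ℝ[X], HurwitzMinorsNonneg q.coeff ∧ q.map (algebraMap ℝ ℂ) =
      (s.map fun z => X - C z).prod) Complex.conj_conj ?zero ?real ?pair hconj
  case zero => exact fun _ => ⟨1, .coeff_one, by simp⟩
  case real =>
    intro x s hx ih hre
    rw [Multiset.forall_mem_cons] at hre
    obtain ⟨q, hq, hmap⟩ := ih hre.2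
    refine ⟨(C 0 * X ^ 2 + C 1 * X + C (-x.re)) * q,
      hq.coeff_quadratic_mul le_rfl zero_le_one (neg_nonneg.mpr hre.1), ?_⟩
    have hx' : (x.re : ℂ) = x := Complex.conj_eq_iff_re.mp hx
    simp [hmap, hx', sub_eq_add_neg]
  case pair =>
    intro z s ih hre
    simp only [Multiset.forall_mem_cons] at hre
    obtain ⟨q, hq, hmap⟩ := ih hre.2.2
    refine ⟨(C 1 * X ^ 2 + C (-(2 * z.re)) * X + C (Complex.normSq z)) * q,
      hq.coeff_quadratic_mul zero_le_one (by linarith) (Complex.normSq_nonneg z), ?_⟩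
    rw [Polynomial.map_mul, map_quadratic_eq_X_sub_C_mul_X_sub_C_conj, hmap, Multiset.map_cons,
      Multiset.map_cons, Multiset.prod_cons, Multiset.prod_cons, mul_assoc]

end Conj

section PowerSums

theorem esymm_two_cons {R : Type*} [CommSemiring R] (a : R) (s : Multiset R) :
    (a ::ₘ s).esymm 2 = s.esymm 2 + a * s.sum := by
  have hmul : (s.map (a * ·)).sum = a * s.sum := by
    rw [Multiset.sum_map_mul_left, Multiset.map_id']
  simp [Multiset.esymm, Multiset.powersetCard_cons, Multiset.powersetCard_one, hmul]

theorem two_mul_esymm_two {R : Type*} [CommRing R] (s : Multiset R) :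
    2 * s.esymm 2 = s.sum ^ 2 - (s.map (· ^ 2)).sum := by
  induction s using Multiset.induction_on with
  | empty => simp [Multiset.esymm, Multiset.powersetCard_zero_right]
  | cons a s ih =>
    rw [esymm_two_cons, mul_add, ih, Multiset.sum_cons, Multiset.map_cons, Multiset.sum_cons]
    ring

theorem two_mul_prod_X_sub_C_coeff_card_sub_two {R : Type*} [CommRing R] {s : Multiset R}
    (hs : 2 ≤ s.card) :
    2 * (s.map fun x => X - C x).prod.coeff (s.card - 2) = s.sum ^ 2 - (s.map (· ^ 2)).sum := by
  rw [Multiset.prod_X_sub_C_coeff s (Nat.sub_le _ _), Nat.sub_sub_self hs, neg_one_sq, one_mul,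
    two_mul_esymm_two]

theorem coeff_card_sub_one_nonpos {p : ℝ[X]} {s : Multiset ℂ}
    (hp : p.map (algebraMap ℝ ℂ) = (s.map fun z => X - C z).prod) (hs : 0 < s.card)
    (hsum : 0 ≤ s.sum) : p.coeff (s.card - 1) ≤ 0 := by
  have hcoeff : (p.coeff (s.card - 1) : ℂ) = -s.sum := by
    rw [← multiset_prod_X_sub_C_coeff_card_pred s hs, ← hp, coeff_map, Complex.coe_algebraMap]
  rw [← Complex.real_le_real, hcoeff, Complex.ofReal_zero]
  exact neg_nonpos.mpr hsum

theorem coeff_card_sub_two_nonpos {p : ℝ[X]} {s : Multiset ℂ}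
    (hp : p.map (algebraMap ℝ ℂ) = (s.map fun z => X - C z).prod) (hs : 2 ≤ s.card)
    (hsum : 0 ≤ (s.map (· ^ 2)).sum - s.sum ^ 2) : p.coeff (s.card - 2) ≤ 0 := by
  have hcoeff : ((2 * p.coeff (s.card - 2) : ℝ) : ℂ) = -((s.map (· ^ 2)).sum - s.sum ^ 2) := by
    rw [neg_sub, ← two_mul_prod_X_sub_C_coeff_card_sub_two hs, ← hp, coeff_map,
      Complex.coe_algebraMap, Complex.ofReal_mul, Complex.ofReal_ofNat]
  have htwo : 2 * p.coeff (s.card - 2) ≤ 0 := by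
    rw [← Complex.real_le_real, hcoeff, Complex.ofReal_zero]
    exact neg_nonpos.mpr hsum
  exact nonpos_of_mul_nonpos_right htwo two_pos

theorem exists_monic_coeff_nonpos_map_eq_prod {δ : ℝ} (hδ : 0 ≤ δ) {s : Multiset ℂ}
    (hs : 0 < s.card) (hre : ∀ z ∈ s, z.re ≤ 0) (hconj : s.map (starRingEnd ℂ) = s)
    (h1 : 0 ≤ ((δ : ℂ) ::ₘ s).sum)
    (h2 : 0 ≤ (((δ : ℂ) ::ₘ s).map (· ^ 2)).sum - ((δ : ℂ) ::ₘ s).sum ^ 2) :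
    ∃ p : ℝ[X], p.Monic ∧ p.natDegree = s.card + 1 ∧ (∀ k ≤ s.card, p.coeff k ≤ 0) ∧
      p.map (algebraMap ℝ ℂ) = (X - C (δ : ℂ)) * (s.map fun z => X - C z).prod := by
  obtain ⟨q, hq, hmap⟩ := exists_hurwitzMinorsNonneg_map_eq_prod hre hconj
  have hmonic : q.Monic := monic_of_injective (algebraMap ℝ ℂ).injective
    (hmap ▸ monic_multisetProd_X_sub_C s)
  have hdeg : q.natDegree = s.card := by
    rw [← natDegree_map (algebraMap ℝ ℂ), hmap, natDegree_multiset_prod_X_sub_C_eq_card]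
  have hmap' : ((X - C δ) * q).map (algebraMap ℝ ℂ) =
      (X - C (δ : ℂ)) * (s.map fun z => X - C z).prod := by
    rw [Polynomial.map_mul, hmap, Polynomial.map_sub, map_X, map_C, Complex.coe_algebraMap]
  have hroots : ((X - C δ) * q).map (algebraMap ℝ ℂ) =
      (((δ : ℂ) ::ₘ s).map fun z => X - C z).prod := by
    rw [hmap', Multiset.map_cons, Multiset.prod_cons]
  refine ⟨(X - C δ) * q, (monic_X_sub_C δ).mul hmonic, ?_, fun k hk => ?_, hmap'⟩
  · rw [(monic_X_sub_C δ).natDegree_mul hmonic, natDegree_X_sub_C, hdeg, add_comm]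
  · have hpred := coeff_card_sub_one_nonpos hroots (by simp) h1
    have hpred' := coeff_card_sub_two_nonpos hroots (by rw [Multiset.card_cons]; omega) h2
    rw [Multiset.card_cons, ← hdeg] at hpred hpred'
    exact hq.coeff_X_sub_C_mul_nonpos hmonic hδ hpred hpred' (hdeg ▸ hk)

end PowerSums

section Matrix

theorem charpoly_eq_of_vecMul_charmatrix_eq_single {R m : Type*} [CommRing R]
    [Fintype m] [DecidableEq m] {M : Matrix m m R} {u : m → R[X]} {p : R[X]} {i k : m}
    (hu : u i = 1) (hp : p.Monic) (hdeg : p.natDegree = Fintype.card m)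
    (h : u ᵥ* M.charmatrix = Pi.single k p) : M.charpoly = p := by
  nontriviality R
  have hdvd : M.charpoly = p * M.charmatrix.adjugate k i := by
    have := congrFun (congrArg (· ᵥ* M.charmatrix.adjugate) h) i
    simpa [vecMul_vecMul, mul_adjugate, vecMul_smul, hu, charpoly] using this
  exact (eq_of_monic_of_dvd_of_natDegree_le hp M.charpoly_monic ⟨_, hdvd⟩
    (M.charpoly_natDegree_eq_dim.trans hdeg.symm).le)

variable {R : Type*} {n : ℕ}

/-- Symmetry of a square matrix about its anti-diagonal. -/
def IsPersymmetric (A : Matrix (Fin n) (Fin n) R) : Prop :=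
  ∀ i j, A i j = A j.rev i.rev

section Border

variable [CommRing R]

/-- The block matrix
```
⎡ 0    a eₙᵀ   b   ⎤
⎢ e₀   A      a e₀ ⎥
⎣ 0    eₙᵀ     0   ⎦
```
with `e₀`, `eₙ` the first and last coordinate vectors: the inductive step of the realization of
polynomials with nonpositive nonleading coefficients. If the entry of the adjugate of `X - A` in the
last row and first column is `1`, the characteristic polynomial `p` of `A` becomes
`X ^ 2 * p - 2 * a * X - b`. -/
def persymmetricBorder (A : Matrix (Fin (n + 1)) (Fin (n + 1)) R) (a b : R) :
    Matrix (Fin (n + 3)) (Fin (n + 3)) R :=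
  of <| Fin.cons (Fin.cons 0 (Fin.snoc (Pi.single (Fin.last n) a) b)) <|
    Fin.snoc (fun i => Fin.cons (if i = 0 then 1 else 0)
      (Fin.snoc (A i) (if i = 0 then a else 0))) <|
      Fin.cons 0 (Fin.snoc (Pi.single (Fin.last n) 1) 0)

theorem vecMul_persymmetricBorder (x y : R) (v : Fin (n + 1) → R)
    (A : Matrix (Fin (n + 1)) (Fin (n + 1)) R) (a b : R) :
    (Fin.cons x (Fin.snoc v y : Fin (n + 2) → R) : Fin (n + 3) → R) ᵥ* persymmetricBorder A a b =
      Fin.cons (v 0) (Fin.snoc (v ᵥ* A + Pi.single (Fin.last n) (a * x + y) : Fin (n + 1) → R)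
        (b * x + a * v 0) : Fin (n + 2) → R) := by
  ext1 j
  simp only [vecMul, dotProduct, Fin.sum_univ_succ (n := n + 2), Fin.sum_univ_castSucc (n := n + 1)]
  refine Fin.cases ?_ (Fin.lastCases ?_ fun j => ?_) j
  · simp [persymmetricBorder]
  · simp only [persymmetricBorder, of_apply, Fin.cons_zero, Fin.cons_succ, Fin.succ_last,
      Nat.succ_eq_add_one, Fin.cons_last, Fin.snoc_last, Fin.snoc_castSucc, mul_ite, mul_zero,
      Finset.sum_ite_eq', Finset.mem_univ, ↓reduceIte, add_zero]
    ring
  · by_cases hj : j = Fin.last n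
    · simp only [persymmetricBorder, hj, vecMul, dotProduct, of_apply, Fin.cons_zero, Fin.cons_succ,
        Fin.succ_last, Nat.succ_eq_add_one, Fin.cons_last, Fin.snoc_last, Fin.snoc_castSucc,
        Pi.single_eq_same, Pi.add_apply, mul_one]
      ring
    · simp [persymmetricBorder, vecMul, dotProduct, hj]

theorem persymmetricBorder_map {S : Type*} [CommRing S] (f : R →+* S)
    (A : Matrix (Fin (n + 1)) (Fin (n + 1)) R) (a b : R) :
    (persymmetricBorder A a b).map f = persymmetricBorder (A.map f) (f a) (f b) := by
  ext1 i j
  refine Fin.cases ?_ (Fin.lastCases ?_ fun i => ?_) i <;>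
    refine Fin.cases ?_ (Fin.lastCases ?_ fun j => ?_) j <;>
    simp [persymmetricBorder, Pi.single_apply, apply_ite f]

theorem IsPersymmetric.persymmetricBorder {A : Matrix (Fin (n + 1)) (Fin (n + 1)) R}
    (hA : IsPersymmetric A) (a b : R) : IsPersymmetric (persymmetricBorder A a b) := by
  intro i j
  refine Fin.cases ?_ (Fin.lastCases ?_ fun i => ?_) i <;>
    refine Fin.cases ?_ (Fin.lastCases ?_ fun j => ?_) j <;>
    simp [_root_.persymmetricBorder, Pi.single_apply, Fin.rev_succ, Fin.rev_castSucc,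
      Fin.rev_eq_iff, ← hA _ _]

theorem persymmetricBorder_nonneg [PartialOrder R] [IsOrderedRing R]
    {A : Matrix (Fin (n + 1)) (Fin (n + 1)) R} (hA : ∀ i j, 0 ≤ A i j) {a b : R} (ha : 0 ≤ a)
    (hb : 0 ≤ b) (i j : Fin (n + 3)) : 0 ≤ persymmetricBorder A a b i j := by
  have hite (P : Prop) [Decidable P] {c : R} (hc : 0 ≤ c) : 0 ≤ if P then c else 0 := by
    split_ifs <;> simp [hc]
  refine Fin.cases ?_ (Fin.lastCases ?_ fun i => ?_) i <;>
    refine Fin.cases ?_ (Fin.lastCases ?_ fun j => ?_) j <;>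
    simp [persymmetricBorder, Pi.single_apply, hite, ha, hb, hA]

theorem vecMul_charmatrix {m : Type*} [Fintype m] [DecidableEq m] (u : m → R[X])
    (A : Matrix m m R) : u ᵥ* A.charmatrix = (X : R[X]) • u - u ᵥ* A.map (C : R →+* R[X]) := by
  simp [charmatrix, vecMul_sub, ← smul_one_eq_diagonal, vecMul_smul]

theorem vecMul_charmatrix_persymmetricBorder {A : Matrix (Fin (n + 1)) (Fin (n + 1)) R}
    {u : Fin (n + 1) → R[X]} {p : R[X]} (hu : u 0 = 1)
    (h : u ᵥ* A.charmatrix = Pi.single (Fin.last n) p) (a b : R) :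
    (Fin.cons 1 (Fin.snoc ((X : R[X]) • u) (X * p - C a) : Fin (n + 2) → R[X]) :
        Fin (n + 3) → R[X]) ᵥ* (persymmetricBorder A a b).charmatrix =
      Pi.single (Fin.last (n + 2)) (X ^ 2 * p - 2 * C a * X - C b) := by
  have hA : u ᵥ* A.map (C : R →+* R[X]) = (X : R[X]) • u - Pi.single (Fin.last n) p := by
    rw [← h, vecMul_charmatrix, sub_sub_cancel]
  rw [vecMul_charmatrix, persymmetricBorder_map, vecMul_persymmetricBorder, smul_vecMul, hA]
  ext1 j
  refine Fin.cases ?_ (Fin.lastCases ?_ fun j => ?_) j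
  · simp [hu]
  · simp only [hu, Pi.smul_apply, Pi.sub_apply, smul_eq_mul, mul_one, add_sub_cancel,
      Fin.succ_last, Nat.succ_eq_add_one, Fin.cons_last, Fin.snoc_last, Pi.single_eq_same]
    ring
  · by_cases hj : j = Fin.last n
    · simp only [hj, Pi.smul_apply, Pi.sub_apply, Pi.add_apply, smul_eq_mul, mul_one,
        add_sub_cancel, Fin.cons_succ, Fin.snoc_castSucc, Pi.single_eq_same, ne_eq,
        Fin.succ_eq_last_succ, Nat.succ_eq_add_one, Fin.castSucc_ne_last, not_false_eq_true,
        Pi.single_eq_of_ne]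
      ring
    · simp [hj]

end Border

theorem vecMul_charmatrix_fin_two [CommRing R] (a b : R) :
    ![1, X - C a] ᵥ* (!![a, b + a ^ 2; 1, a]).charmatrix =
      Pi.single (Fin.last 1) (X ^ 2 - 2 * C a * X - C b) := by
  ext1 i
  fin_cases i
  · simp [vecMul, dotProduct, charmatrix_apply, Fin.sum_univ_two]
  · simp only [vecMul, dotProduct, charmatrix_apply, Fin.sum_univ_two, Nat.succ_eq_add_one,
      Nat.reduceAdd, Fin.mk_one, Fin.isValue, of_apply, cons_val', cons_val_zero, cons_val_one,
      cons_val_fin_one, ne_eq, zero_ne_one, not_false_eq_true, diagonal_apply_ne,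
      diagonal_apply_eq, map_add, map_pow, zero_sub, neg_add_rev, one_mul, Fin.reduceLast,
      Pi.single_eq_same]
    ring

section Realization

theorem natDegree_divX_divX {S : Type*} [Semiring S] (p : S[X]) :
    p.divX.divX.natDegree = p.natDegree - 2 := by
  simp only [natDegree_divX_eq_natDegree_tsub_one, Nat.sub_sub, Nat.reduceAdd]

theorem monic_divX_divX {S : Type*} [Semiring S] {p : S[X]} (hp : p.Monic)
    (hdeg : 2 ≤ p.natDegree) : p.divX.divX.Monic := by
  rw [Monic, leadingCoeff, natDegree_divX_divX, coeff_divX, coeff_divX, add_assoc,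
    Nat.sub_add_cancel hdeg, hp.coeff_natDegree]

theorem eq_X_sq_mul_divX_divX_sub {F : Type*} [Field F] [NeZero (2 : F)] (p : F[X]) :
    p = X ^ 2 * p.divX.divX - 2 * C (-p.coeff 1 / 2) * X - C (-p.coeff 0) := by
  have htwo : 2 * C (-p.coeff 1 / 2) = -C (p.coeff 1) := by
    rw [← C_ofNat, ← C_mul, mul_div_cancel₀ _ two_ne_zero, C_neg]
  have hdivX : X * p.divX.divX + C (p.coeff 1) = p.divX := by
    rw [← zero_add 1, ← coeff_divX, X_mul_divX_add]
  rw [htwo, C_neg]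
  linear_combination -p.X_mul_divX_add - X * hdivX

variable {K : Type*} [Field K] [LinearOrder K] [IsStrictOrderedRing K]

theorem exists_persymmetric_vecMul_charmatrix_eq_single {n : ℕ} {p : K[X]} (hp : p.Monic)
    (hdeg : p.natDegree = n + 1) (hcoeff : ∀ k ≤ n, p.coeff k ≤ 0) :
    ∃ A : Matrix (Fin (n + 1)) (Fin (n + 1)) K, (∀ i j, 0 ≤ A i j) ∧ IsPersymmetric A ∧
      ∃ u : Fin (n + 1) → K[X], u 0 = 1 ∧ u ᵥ* A.charmatrix = Pi.single (Fin.last n) p := by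
  induction n using Nat.twoStepInduction generalizing p with
  | zero =>
    refine ⟨of fun _ _ => -p.coeff 0, fun _ _ => neg_nonneg.mpr (hcoeff 0 le_rfl),
      fun _ _ => rfl, fun _ => 1, rfl, ?_⟩
    ext1 i
    rw [Fin.fin_one_eq_zero i, hp.eq_X_add_C hdeg]
    simp [vecMul, dotProduct, charmatrix_apply]
  | one =>
    have ha : 0 ≤ -p.coeff 1 / 2 := div_nonneg (neg_nonneg.mpr (hcoeff 1 le_rfl)) zero_le_two
    have hb : 0 ≤ -p.coeff 0 := neg_nonneg.mpr (hcoeff 0 zero_le_one)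
    have hone : p.divX.divX = 1 := eq_one_of_monic_natDegree_zero (monic_divX_divX hp hdeg.ge)
      (by rw [natDegree_divX_divX, hdeg])
    have hquad := eq_X_sq_mul_divX_divX_sub p
    rw [hone, mul_one] at hquad
    refine ⟨!![-p.coeff 1 / 2, -p.coeff 0 + (-p.coeff 1 / 2) ^ 2; 1, -p.coeff 1 / 2], ?_, ?_,
      ![1, X - C (-p.coeff 1 / 2)], rfl, by rw [vecMul_charmatrix_fin_two, ← hquad]⟩
    · simp [Fin.forall_fin_two, ha, add_nonneg hb (sq_nonneg _)]
    · simp [IsPersymmetric, Fin.forall_fin_two]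
  | more n ih _ =>
    have ha : 0 ≤ -p.coeff 1 / 2 :=
      div_nonneg (neg_nonneg.mpr (hcoeff 1 (by omega))) zero_le_two
    have hb : 0 ≤ -p.coeff 0 := neg_nonneg.mpr (hcoeff 0 (by omega))
    obtain ⟨A, hA, hpersymm, u, hu, hvec⟩ := ih (monic_divX_divX hp (by omega))
      (by rw [natDegree_divX_divX, hdeg]; rfl)
      (fun k hk => by simpa only [coeff_divX] using hcoeff (k + 2) (by omega))
    exact ⟨persymmetricBorder A (-p.coeff 1 / 2) (-p.coeff 0),
      persymmetricBorder_nonneg hA ha hb, hpersymm.persymmetricBorder _ _, _, Fin.cons_zero _ _,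
      by rw [vecMul_charmatrix_persymmetricBorder hu hvec, ← eq_X_sq_mul_divX_divX_sub]⟩

theorem exists_persymmetric_charpoly_eq {n : ℕ} {p : K[X]} (hp : p.Monic)
    (hdeg : p.natDegree = n + 1) (hcoeff : ∀ k ≤ n, p.coeff k ≤ 0) :
    ∃ A : Matrix (Fin (n + 1)) (Fin (n + 1)) K, (∀ i j, 0 ≤ A i j) ∧ IsPersymmetric A ∧
      A.charpoly = p := by
  obtain ⟨A, hA, hpersymm, u, hu, hvec⟩ :=
    exists_persymmetric_vecMul_charmatrix_eq_single hp hdeg hcoeff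
  exact ⟨A, hA, hpersymm, charpoly_eq_of_vecMul_charmatrix_eq_single hu hp
    (by rw [hdeg, Fintype.card_fin]) hvec⟩

end Realization

end Matrix

/-- The general (order n) version: a positive Perron root together with
n-1 complex numbers with nonpositive real parts, closed under conjugation, with
s₁ ≥ 0 and s₂ - s₁² ≥ 0, is persymmetrically realizable. -/
theorem stmt_6 (n : ℕ) (hn : 2 ≤ n) (δ : ℝ) (hδ : 0 < δ)
    (d : Fin (n - 1) → ℂ) (hre : ∀ i, (d i).re ≤ 0)
    (hconj : Multiset.map (starRingEnd ℂ) (↑(List.ofFn d) : Multiset ℂ)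
      = (↑(List.ofFn d) : Multiset ℂ))
    (s : ℕ → ℂ) (hs : ∀ k, s k = (δ : ℂ) ^ k + ∑ i, d i ^ k)
    (h1 : 0 ≤ s 1) (h2 : 0 ≤ s 2 - (s 1) ^ 2) :
    ∃ A : Matrix (Fin n) (Fin n) ℝ, (∀ i j, 0 ≤ A i j) ∧
      (∀ i j, A i j = A j.rev i.rev) ∧
      (Matrix.charpoly A).map (algebraMap ℝ ℂ) =
        (X - C (δ : ℂ)) * ∏ i, (X - C (d i)) := by
  obtain ⟨m, rfl⟩ := Nat.exists_eq_add_of_le' (one_le_two.trans hn)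
  set D : Multiset ℂ := ↑(List.ofFn d)
  have hcard : D.card = m := List.length_ofFn
  have hsum : s 1 = ((δ : ℂ) ::ₘ D).sum := by
    simp [hs, D, List.sum_ofFn]
  have hsum_sq : s 2 = (((δ : ℂ) ::ₘ D).map (· ^ 2)).sum := by
    simp [hs, D, List.map_ofFn, List.sum_ofFn]
  have hprod : (D.map fun z => X - C z).prod = ∏ i, (X - C (d i)) := by
    simp [D, List.map_ofFn, List.prod_ofFn]
  have hre' : ∀ z ∈ D, z.re ≤ 0 := by
    simpa [D, List.mem_ofFn] using hre
  rw [hsum_sq, hsum] at h2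
  obtain ⟨p, hmonic, hdeg, hcoeff, hmap⟩ := exists_monic_coeff_nonpos_map_eq_prod hδ.le
    (by omega) hre' hconj (hsum ▸ h1) h2
  rw [hcard] at hdeg hcoeff
  obtain ⟨A, hA, hpersymm, hchar⟩ := exists_persymmetric_charpoly_eq hmonic hdeg hcoeff
  exact ⟨A, hA, hpersymm, by rw [hchar, hmap, hprod]⟩
end
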